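/- Let V : ℝ → ℝ be an even, locally Lebesgue-integrable function with ess inf V > −∞ and V(x) → ∞ as |x| → ∞. Let (λ_n) be a sequence of positive reals with λ_n → ∞, and let w_n : ℝ → ℝ be twice differentiable functions satisfying w_n''(x) = 4π²(V(x) − λ_n)·w_n(x) for all x ∈ ℝ. Assume: (H1) w_n is even when n is even and odd when n is odd; (H2) for every nonzero real x, both sequences (√λ_{2n} · x)_n and (√λ_{2n+1} · x)_n are equidistributed modulo 1; (H3) sgn(w_{2n}(0)) = (−1)^n and sgn(w'_{2n+1}(0)) = (−1)^n for all n. Let x, y be distinct real numbers with q·x = p·y for some nonzero coprime integers p, q. Then (1/N) · #{0 ≤ n < N : sgn(w_n(x)) = sgn(w_n(y))} converges as N → ∞, to 1/2 + 1/(2pq) if p ≡ q ≡ 1 (mod 4) or p ≡ q ≡ 3 (mod 4), and to 1/2 otherwise. -/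

import Mathlib

open Filter Real MeasureTheory
open scoped Classical

noncomputable def sgn (t : ℝ) : ℝ := if 0 < t then 1 else if t < 0 then -1 else 0

def EquidistributedMod1 (a : ℕ → ℝ) : Prop :=
  ∀ c d : ℝ, 0 ≤ c → c ≤ d → d ≤ 1 →
    Tendsto (fun N : ℕ =>
      (((Finset.range N).filter (fun n => Int.fract (a n) ∈ Set.Icc c d)).card : ℝ) / N)
      atTop (nhds (d - c))

/-!
Comparing `w'' = 4π²(V - l)w` with its free version `u'' = -4π²l u` by Duhamel's formula shows that
`w x` differs from the free solution by `O(1 / √l)` relative to the amplitude, so the two have the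
same sign unless the free solution nearly vanishes at `x`. Equidistribution makes this exception
negligible. By parity the free solution is a multiple of `cos (2π√l x)` for even indices
and of `sin (2π√l x)` for odd ones; writing `x = p t` and `y = q t`, the correlations are therefore
those of `cos (2πpu) cos (2πqu)` and `sin (2πpu) sin (2πqu)` with `u = √l t` uniform modulo one.

The sign of such a product is constant between consecutive multiples of `1 / K` for a suitable `K`,
so its mean is a finite average. For `p`, `q` odd and coprime, the Chinese remainder theorem
evaluates the sine average to `1 / (p q)`, and shifting `u` by `1 / 4` turns sines into cosines at
the cost of the factor `χ₄ p * χ₄ q`. If `p + q` is odd, shifting `u` by `1 / 2` flips the sign of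
the product, so both averages vanish.
-/

/-! ### Cesàro means and natural density -/

lemma sum_range_eq_sum_even_add_sum_odd {M : Type*} [AddCommMonoid M] (f : ℕ → M) (N : ℕ) :
    ∑ n ∈ Finset.range N, f n = ∑ n ∈ Finset.range ((N + 1) / 2), f (2 * n) +
      ∑ n ∈ Finset.range (N / 2), f (2 * n + 1) := by
  induction N with
  | zero => simp
  | succ N ih =>
    rw [Finset.sum_range_succ, ih]
    rcases Nat.even_or_odd' N with ⟨m, rfl | rfl⟩
    · rw [show (2 * m + 1 + 1) / 2 = m + 1 by omega, show (2 * m + 1) / 2 = m by omega,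
        show 2 * m / 2 = m by omega, Finset.sum_range_succ (fun n => f (2 * n)), add_right_comm]
    · rw [show (2 * m + 1 + 1 + 1) / 2 = m + 1 by omega,
        show (2 * m + 1 + 1) / 2 = m + 1 by omega, show (2 * m + 1) / 2 = m by omega,
        Finset.sum_range_succ (fun n => f (2 * n + 1)), add_assoc]

/-- The Cesàro means of `f` converge to `L`: the common language for densities of sets and averages
of sign products. -/
def HasMean (f : ℕ → ℝ) (L : ℝ) : Prop :=
  Tendsto (fun N : ℕ => (∑ n ∈ Finset.range N, f n) / N) atTop (nhds L)

/-- The set `s` has natural (asymptotic) density `d`, encoded as the mean of its indicator. -/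
def HasDensity (s : Set ℕ) (d : ℝ) : Prop :=
  HasMean (s.indicator 1) d

namespace HasMean

variable {f g : ℕ → ℝ} {A B : ℝ}

lemma unique (hA : HasMean f A) (hB : HasMean f B) : A = B :=
  tendsto_nhds_unique hA hB

lemma const (A : ℝ) : HasMean (fun _ => A) A := by
  refine (tendsto_const_nhds (x := A)).cesaro.congr fun N => ?_
  rw [div_eq_inv_mul]

lemma add (hf : HasMean f A) (hg : HasMean g B) : HasMean (fun n => f n + g n) (A + B) := by
  refine (Tendsto.add hf hg).congr fun N => ?_
  rw [Finset.sum_add_distrib, add_div]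

lemma const_mul (c : ℝ) (hf : HasMean f A) : HasMean (fun n => c * f n) (c * A) := by
  refine (Tendsto.const_mul c hf).congr fun N => ?_
  rw [← Finset.mul_sum, mul_div_assoc]

lemma sub (hf : HasMean f A) (hg : HasMean g B) : HasMean (fun n => f n - g n) (A - B) := by
  simpa [sub_eq_add_neg] using hf.add (hg.const_mul (-1))

lemma sum {ι : Type*} (s : Finset ι) {f : ι → ℕ → ℝ} {A : ι → ℝ}
    (h : ∀ i ∈ s, HasMean (f i) (A i)) :
    HasMean (fun n => ∑ i ∈ s, f i n) (∑ i ∈ s, A i) := by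
  refine (tendsto_finsetSum s h).congr fun N => ?_
  rw [Finset.sum_comm, Finset.sum_div]

lemma of_abs_le (hfg : ∀ n, |f n| ≤ g n) (hg : HasMean g 0) : HasMean f 0 := by
  refine squeeze_zero_norm (fun N => ?_) hg
  rw [Real.norm_eq_abs, abs_div, Nat.abs_cast]
  gcongr
  exact (Finset.abs_sum_le_sum_abs _ _).trans (Finset.sum_le_sum fun n _ => hfg n)

lemma interleave (hA : HasMean (fun n => f (2 * n)) A)
    (hB : HasMean (fun n => f (2 * n + 1)) B) : HasMean f ((A + B) / 2) := by
  have half_div : Tendsto (fun N : ℕ => ((N / 2 : ℕ) : ℝ) / N) atTop (nhds (1 / 2)) := by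
    refine ((tendsto_nat_floor_mul_div_atTop (R := ℝ) (by norm_num : (0 : ℝ) ≤ 1 / 2)).comp
      tendsto_natCast_atTop_atTop).congr fun N => ?_
    rw [Function.comp_apply, one_div_mul_eq_div, Nat.floor_div_ofNat, Nat.floor_natCast]
  have succ_half_div : Tendsto (fun N : ℕ => (((N + 1) / 2 : ℕ) : ℝ) / N) atTop
      (nhds (1 / 2)) := by
    have h := half_div.const_sub 1
    rw [sub_half] at h
    refine h.congr' ?_
    filter_upwards [eventually_ne_atTop 0] with N hN
    rw [show (N + 1) / 2 = N - N / 2 by omega, Nat.cast_sub (Nat.div_le_self N 2), sub_div,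
      div_self (Nat.cast_ne_zero.2 hN)]
  have half_atTop := Nat.tendsto_div_const_atTop two_ne_zero
  have hlim := ((hA.comp (half_atTop.comp (tendsto_add_atTop_nat 1))).mul succ_half_div).add
    ((hB.comp half_atTop).mul half_div)
  rw [mul_one_div, mul_one_div, ← add_div] at hlim
  have hmean (g : ℕ → ℝ) (m N : ℕ) :
      (∑ n ∈ Finset.range m, g n) / m * (m / N) = (∑ n ∈ Finset.range m, g n) / N := by
    rw [← mul_div_assoc, div_mul_cancel_of_imp fun hm => by simp [Nat.cast_eq_zero.1 hm]]
  refine hlim.congr fun N => ?_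
  simp only [Function.comp_apply, hmean]
  rw [sum_range_eq_sum_even_add_sum_odd f N, add_div]

end HasMean

lemma hasDensity_iff_tendsto_card {p : ℕ → Prop} [DecidablePred p] {d : ℝ} :
    HasDensity {n | p n} d ↔
      Tendsto (fun N : ℕ => (((Finset.range N).filter p).card : ℝ) / N) atTop (nhds d) := by
  simp only [HasDensity, HasMean, Set.indicator_apply, Set.mem_ofPred_eq, Pi.one_apply,
    Finset.sum_boole]

lemma HasDensity.zero_of_subset {s t : Set ℕ} (ht : HasDensity t 0) (hst : s ⊆ t) :
    HasDensity s 0 := by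
  refine HasMean.of_abs_le (fun n => ?_) ht
  rw [abs_of_nonneg (Set.indicator_nonneg (by simp) n)]
  exact Set.indicator_le_indicator_of_subset hst (by simp) n

lemma HasDensity.union_zero {s t : Set ℕ} (hs : HasDensity s 0) (ht : HasDensity t 0) :
    HasDensity (s ∪ t) 0 := by
  refine HasMean.of_abs_le (fun n => ?_) (by simpa using HasMean.add hs ht)
  by_cases hns : n ∈ s <;> by_cases hnt : n ∈ t <;> simp [hns, hnt]

/-- The filter of sets of natural numbers of asymptotic density one; `∀ᶠ n in densityOne, p n`
says that `p` holds for almost all natural numbers. -/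
def densityOne : Filter ℕ :=
  Filter.comk (fun s => HasDensity s 0)
    (by simpa [HasDensity, Pi.zero_def] using HasMean.const 0)
    (fun _ ht _ hst => ht.zero_of_subset hst)
    (fun _ hs _ ht => hs.union_zero ht)

lemma eventually_densityOne_iff {p : ℕ → Prop} :
    (∀ᶠ n in densityOne, p n) ↔ HasDensity {n | ¬p n} 0 :=
  Iff.rfl

lemma HasMean.congr_densityOne {f g : ℕ → ℝ} {L C : ℝ} (hg : HasMean g L)
    (hC : ∀ n, |f n - g n| ≤ C) (hfg : f =ᶠ[densityOne] g) : HasMean f L := by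
  have hdiff : HasMean (fun n => f n - g n) 0 := by
    refine of_abs_le (fun n => ?_) (by simpa using (eventually_densityOne_iff.1 hfg).const_mul C)
    by_cases hn : f n = g n <;> simp [hn, hC n]
  simpa using hg.add hdiff

lemma eventually_densityOne_of_forall_hasDensity {p : ℕ → Prop}
    (h : ∀ ε > 0, ∃ s : Set ℕ, ∃ d > 1 - ε, HasDensity s d ∧ ∀ᶠ n in densityOne, n ∈ s → p n) :
    ∀ᶠ n in densityOne, p n := by
  refine eventually_densityOne_iff.2 (Metric.tendsto_atTop'.2 fun ε hε => ?_)
  obtain ⟨s, d, hd, hs, hp⟩ := h ε hε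
  have hbound : HasMean (fun n => 1 - s.indicator 1 n + {n | ¬(n ∈ s → p n)}.indicator 1 n)
      (1 - d + 0) := ((HasMean.const 1).sub hs).add (eventually_densityOne_iff.1 hp)
  obtain ⟨N₀, hN₀⟩ := eventually_atTop.1 (hbound.eventually_lt_const (by linarith : _ < ε))
  refine ⟨N₀, fun N hN => ?_⟩
  rw [Real.dist_0_eq_abs, abs_of_nonneg]
  · refine lt_of_le_of_lt ?_ (hN₀ N hN.le)
    gcongr with n
    by_cases hns : n ∈ s <;> by_cases hnp : p n <;> simp [hns, hnp]
  · exact div_nonneg (Finset.sum_nonneg fun n _ => Set.indicator_nonneg (by simp) n)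
      N.cast_nonneg

/-! ### Equidistributed sequences -/

namespace EquidistributedMod1

variable {a : ℕ → ℝ}

lemma hasDensity_Icc (ha : EquidistributedMod1 a) {c d : ℝ} (hc : 0 ≤ c) (hcd : c ≤ d)
    (hd : d ≤ 1) : HasDensity {n | Int.fract (a n) ∈ Set.Icc c d} (d - c) :=
  hasDensity_iff_tendsto_card.2 (ha c d hc hcd hd)

lemma hasDensity_Ico (ha : EquidistributedMod1 a) {c d : ℝ} (hc : 0 ≤ c) (hcd : c ≤ d)
    (hd : d ≤ 1) : HasDensity {n | Int.fract (a n) ∈ Set.Ico c d} (d - c) := by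
  have h := (ha.hasDensity_Icc hc hcd hd).sub (ha.hasDensity_Icc (hc.trans hcd) le_rfl hd)
  rw [sub_self, sub_zero] at h
  unfold HasDensity
  convert h using 2 with n
  rcases lt_trichotomy (Int.fract (a n)) d with hlt | heq | hgt
  · simp [Set.indicator_apply, hlt.le, hlt.ne, hlt]
  · simp [heq, hcd]
  · simp [hgt.not_ge, hgt.not_gt, hgt.ne']

lemma hasMean_comp_floor (ha : EquidistributedMod1 a) {K : ℕ} (hK : K ≠ 0) (G : ℕ → ℝ) :
    HasMean (fun n => G ⌊K * Int.fract (a n)⌋₊) ((∑ k ∈ Finset.range K, G k) / K) := by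
  have hK' : (0 : ℝ) < K := by positivity
  have hcell (k : ℕ) (hk : k ∈ Finset.range K) :
      HasMean (fun n => G k * {n | Int.fract (a n) ∈ Set.Ico ((k : ℝ) / K) ((k + 1) / K)}.indicator
        1 n) (G k * (1 / K)) := by
    have hk' : ((k : ℝ) + 1) / K ≤ 1 := by
      rw [div_le_one hK']
      exact_mod_cast Finset.mem_range.1 hk
    have h := ha.hasDensity_Ico (c := k / K) (by positivity) (by gcongr; linarith) hk'
    rw [← sub_div, add_sub_cancel_left] at h
    exact h.const_mul _
  have hsum := HasMean.sum (Finset.range K) hcell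
  rw [← Finset.sum_mul, mul_one_div] at hsum
  convert hsum using 2 with n
  have hmem (k : ℕ) : Int.fract (a n) ∈ Set.Ico ((k : ℝ) / K) ((k + 1) / K) ↔
      ⌊K * Int.fract (a n)⌋₊ = k := by
    rw [Nat.floor_eq_iff (by positivity), Set.mem_Ico, div_le_iff₀' hK', lt_div_iff₀' hK']
  have hlt : ⌊K * Int.fract (a n)⌋₊ < K :=
    (Nat.floor_lt (by positivity)).2 (mul_lt_of_lt_one_right hK' (Int.fract_lt_one _))
  simp only [Set.indicator_apply, Set.mem_ofPred_eq, hmem]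
  simp [hlt]

lemma eventually_fract_ne (ha : EquidistributedMod1 a) (c : ℝ) :
    ∀ᶠ n in densityOne, Int.fract (a n) ≠ c := by
  by_cases hc : 0 ≤ c ∧ c ≤ 1
  · have h := ha.hasDensity_Icc hc.1 le_rfl hc.2
    rw [sub_self] at h
    simpa [eventually_densityOne_iff] using h
  · refine Eventually.of_forall fun n hn => hc ?_
    exact hn ▸ ⟨Int.fract_nonneg _, (Int.fract_lt_one _).le⟩

lemma eventually_mul_ne_intCast (ha : EquidistributedMod1 a) {K : ℕ} (hK : K ≠ 0) :
    ∀ᶠ n in densityOne, ∀ m : ℤ, K * a n ≠ m := by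
  have hK' : (0 : ℝ) < K := by positivity
  have hne := (Filter.eventually_all_finset (Finset.range K)).2
    fun k _ => ha.eventually_fract_ne ((k : ℝ) / K)
  filter_upwards [hne] with n hn m hm
  have hr : (((m - K * ⌊a n⌋ : ℤ)) : ℝ) = K * Int.fract (a n) := by
    push_cast
    rw [← hm, ← mul_sub, Int.self_sub_floor]
  lift m - K * ⌊a n⌋ to ℕ using by
    exact_mod_cast hr ▸ mul_nonneg hK'.le (Int.fract_nonneg _) with k
  have hkK : (k : ℝ) < K := by
    rw [← Int.cast_natCast k, hr]
    exact mul_lt_of_lt_one_right hK' (Int.fract_lt_one _)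
  refine hn k (Finset.mem_range.2 (by exact_mod_cast hkK)) ?_
  rw [eq_div_iff hK'.ne', mul_comm, ← hr, Int.cast_natCast]

-- If `r n` stayed bounded by `R`, then `r n * x` would stay in `[0, R * x]`, a set of small length
-- modulo 1 for small `x`.
lemma tendsto_densityOne_atTop {r : ℕ → ℝ} (hr : ∀ n, 0 ≤ r n)
    (h : ∀ x > 0, EquidistributedMod1 (fun n => r n * x)) : Tendsto r densityOne atTop := by
  refine tendsto_atTop.2 fun R => eventually_densityOne_of_forall_hasDensity fun ε hε => ?_
  have hc : 0 < min (ε / 2) 1 := by positivity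
  have hx : 0 < min (ε / 2) 1 / (|R| + 1) := by positivity
  refine ⟨_, _, ?_, (h _ hx).hasDensity_Icc hc.le (min_le_right _ _) le_rfl,
    Eventually.of_forall fun n hn => ?_⟩
  · linarith [min_le_left (ε / 2) 1]
  · have hle : min (ε / 2) 1 ≤ r n * (min (ε / 2) 1 / (|R| + 1)) :=
      hn.1.trans (sub_le_self _ (by exact_mod_cast Int.floor_nonneg.2 (mul_nonneg (hr n) hx.le)))
    rw [← mul_div_assoc, le_div_iff₀ (by positivity), mul_comm, mul_le_mul_iff_left₀ hc] at hle
    linarith [le_abs_self R]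

end EquidistributedMod1

lemma two_mul_le_abs_sin_pi_mul {δ x : ℝ} (hx : Int.fract x ∈ Set.Icc δ (1 - δ)) :
    2 * δ ≤ |sin (π * x)| := by
  have habs : |sin (π * x)| = sin (π * Int.fract x) := by
    have hs := sin_sub_int_mul_pi (π * x) ⌊x⌋
    rw [← abs_of_nonneg (sin_nonneg_of_nonneg_of_le_pi (by positivity)
      (mul_le_of_le_one_right pi_pos.le (Int.fract_lt_one x).le)), Int.fract, mul_sub,
      mul_comm π (⌊x⌋ : ℝ), hs, abs_mul, abs_zpow, abs_neg, abs_one, one_zpow, one_mul]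
  rw [habs]
  have hlin {t : ℝ} (h0 : 0 ≤ t) (ht : t ≤ 1 / 2) : 2 * t ≤ sin (π * t) := by
    have := mul_le_sin (mul_nonneg pi_pos.le h0) (by nlinarith [pi_pos])
    rwa [← mul_assoc, div_mul_cancel₀ _ pi_ne_zero] at this
  rcases le_total (Int.fract x) (1 / 2) with hle | hge
  · linarith [hlin (Int.fract_nonneg x) hle, hx.1]
  · have := hlin (t := 1 - Int.fract x) (by linarith [Int.fract_lt_one x]) (by linarith)
    rw [mul_sub π, mul_one, sin_pi_sub] at this
    linarith [hx.2]

namespace EquidistributedMod1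

variable {a ε : ℕ → ℝ}

lemma eventually_lt_abs_sin_pi_mul (ha : EquidistributedMod1 a)
    (hε : Tendsto ε densityOne (nhds 0)) : ∀ᶠ n in densityOne, ε n < |sin (π * a n)| := by
  refine eventually_densityOne_of_forall_hasDensity fun η hη => ?_
  have hδ : 0 < min (η / 3) (1 / 2) := by positivity
  refine ⟨_, _, ?_, ha.hasDensity_Icc hδ.le (d := 1 - min (η / 3) (1 / 2)) ?_ (by linarith), ?_⟩
  · linarith [min_le_left (η / 3) (1 / 2)]
  · linarith [min_le_right (η / 3) (1 / 2)]
  · filter_upwards [hε.eventually_lt_const (mul_pos two_pos hδ)] with n hn hmem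
    exact hn.trans_le (two_mul_le_abs_sin_pi_mul hmem)

end EquidistributedMod1

lemma sgn_eq_sign (t : ℝ) : sgn t = (SignType.sign t : ℝ) := by
  rcases lt_trichotomy t 0 with h | rfl | h
  · simp [sgn, h, h.le.not_gt]
  · simp [sgn]
  · simp [sgn, h]

lemma sgn_mul (s t : ℝ) : sgn (s * t) = sgn s * sgn t := by
  simp only [sgn_eq_sign, sign_mul, SignType.coe_mul]

lemma sgn_neg (t : ℝ) : sgn (-t) = -sgn t := by
  simp only [sgn_eq_sign, Left.sign_neg, SignType.coe_neg]

lemma sgn_of_pos {t : ℝ} (ht : 0 < t) : sgn t = 1 :=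
  if_pos ht

lemma sgn_of_neg {t : ℝ} (ht : t < 0) : sgn t = -1 := by
  rw [← neg_neg t, sgn_neg, sgn_of_pos (neg_pos.2 ht)]

lemma abs_sgn_le_one (t : ℝ) : |sgn t| ≤ 1 := by
  rcases lt_trichotomy t 0 with h | rfl | h
  · simp [sgn_of_neg h]
  · simp [sgn]
  · simp [sgn_of_pos h]

lemma abs_sgn_sub_sgn_le_two (s t : ℝ) : |sgn s - sgn t| ≤ 2 :=
  (abs_sub _ _).trans ((add_le_add (abs_sgn_le_one s) (abs_sgn_le_one t)).trans_eq
    one_add_one_eq_two)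

lemma sgn_eq_sgn_of_mul_pos {s t : ℝ} (h : 0 < s * t) : sgn s = sgn t := by
  rcases mul_pos_iff.1 h with ⟨hs, ht⟩ | ⟨hs, ht⟩
  · rw [sgn_of_pos hs, sgn_of_pos ht]
  · rw [sgn_of_neg hs, sgn_of_neg ht]

lemma sgn_eq_sgn_of_forall_ne_zero {g : ℝ → ℝ} {s t : ℝ} (hg : ContinuousOn g (Set.uIcc s t))
    (h : ∀ u ∈ Set.uIcc s t, g u ≠ 0) : sgn (g s) = sgn (g t) := by
  by_contra hne
  have hmem : 0 ∈ Set.uIcc (g s) (g t) := by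
    rw [Set.mem_uIcc]
    by_contra! hcon
    refine hne (sgn_eq_sgn_of_mul_pos (mul_pos_iff.2 ?_))
    rcases lt_trichotomy (g s) 0 with hneg | hzero | hpos
    · exact Or.inr ⟨hneg, hcon.1 hneg.le⟩
    · exact absurd hzero (h s Set.left_mem_uIcc)
    · exact Or.inl ⟨hpos, not_le.1 fun ht => (hcon.2 ht).not_gt hpos⟩
  obtain ⟨u, hu, hu0⟩ := intermediate_value_uIcc hg hmem
  exact h u hu hu0

namespace EquidistributedMod1

variable {a : ℕ → ℝ}

lemma hasMean_sgn_comp (ha : EquidistributedMod1 a) {g : ℝ → ℝ} (hg : Continuous g)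
    (hper : Function.Periodic g 1) {K : ℕ} (hK : K ≠ 0)
    (hzero : ∀ u, g u = 0 → ∃ m : ℤ, K * u = m) :
    HasMean (fun n => sgn (g (a n)))
      ((∑ k ∈ Finset.range K, sgn (g ((k + 1 / 2) / K))) / K) := by
  have hK' : (0 : ℝ) < K := by positivity
  refine (ha.hasMean_comp_floor hK fun k => sgn (g ((k + 1 / 2) / K))).congr_densityOne (C := 2)
    (fun n => abs_sgn_sub_sgn_le_two _ _) ?_
  filter_upwards [ha.eventually_mul_ne_intCast hK] with n hn
  set u := Int.fract (a n) with hu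
  set k := ⌊K * u⌋₊
  have hgu : g (a n) = g u := by
    simpa using (hper.sub_int_mul_eq (x := a n) ⌊a n⌋).symm
  have hku : k ≠ K * u := fun h => hn (k + K * ⌊a n⌋) (by
    push_cast
    rw [h, ← mul_add, hu, Int.fract_add_floor])
  have hcell (v : ℝ) (hkv : k < K * v) (hvk : K * v < k + 1) : g v ≠ 0 := fun hv => by
    obtain ⟨m, hm⟩ := hzero v hv
    rw [hm] at hkv hvk
    norm_cast at hkv hvk
    omega
  have hlt : k < K * u :=
    (Nat.floor_le (mul_nonneg hK'.le (Int.fract_nonneg _))).lt_of_ne hku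
  have hgt : K * u < k + 1 := Nat.lt_floor_add_one _
  have hmid : K * ((k + 1 / 2) / K) = (k : ℝ) + 1 / 2 := mul_div_cancel₀ _ hK'.ne'
  rw [hgu]
  refine sgn_eq_sgn_of_forall_ne_zero hg.continuousOn fun v hv => ?_
  rcases Set.mem_uIcc.1 hv with ⟨h1, h2⟩ | ⟨h1, h2⟩ <;>
  · have h1' := mul_le_mul_of_nonneg_left h1 hK'.le
    have h2' := mul_le_mul_of_nonneg_left h2 hK'.le
    exact hcell v (by linarith) (by linarith)

end EquidistributedMod1

/-! ### Correlations of signs of sines and cosines -/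

lemma sum_range_add_of_periodic {M : Type*} [AddCancelCommMonoid M] {f : ℕ → M} {K : ℕ}
    (hf : Function.Periodic f K) (j : ℕ) :
    ∑ k ∈ Finset.range K, f (k + j) = ∑ k ∈ Finset.range K, f k := by
  induction j with
  | zero => simp
  | succ j ih =>
    have h := (Finset.sum_range_succ' (fun k => f (k + j)) K).symm.trans
      (Finset.sum_range_succ _ K)
    rw [zero_add, add_comm K j, hf j] at h
    rw [← ih, ← add_right_cancel h]
    exact Finset.sum_congr rfl fun k _ => by rw [← add_assoc, add_right_comm]

lemma sum_range_mul_of_coprime {M : Type*} [CommSemiring M] {P Q : ℕ} (hP : P ≠ 0) (hQ : Q ≠ 0)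
    (h : P.Coprime Q) (f g : ℕ → M) :
    ∑ j ∈ Finset.range (P * Q), f (j % P) * g (j % Q) =
      (∑ a ∈ Finset.range P, f a) * ∑ b ∈ Finset.range Q, g b := by
  rw [Finset.sum_mul_sum, ← Finset.sum_product']
  have hmaps : Set.MapsTo (fun j => (j % P, j % Q)) (Finset.range (P * Q))
      (Finset.range P ×ˢ Finset.range Q : Finset (ℕ × ℕ)) := fun j _ => by
    simp [Nat.mod_lt _ hP.pos, Nat.mod_lt _ hQ.pos]
  have hinj : Set.InjOn (fun j => (j % P, j % Q)) (Finset.range (P * Q)) := fun i hi j hj hij =>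
    Nat.ModEq.eq_of_lt_of_lt ((Nat.modEq_and_modEq_iff_modEq_mul h).1 (Prod.mk.inj hij))
      (Finset.mem_range.1 hi) (Finset.mem_range.1 hj)
  exact Finset.sum_nbij _ hmaps hinj
    (Finset.surjOn_of_injOn_of_card_le _ hmaps hinj (by simp)) fun _ _ => rfl

lemma neg_one_pow_div_of_odd {Q : ℕ} (hQ : Odd Q) (k : ℕ) :
    (-1 : ℝ) ^ (k / Q) = (-1) ^ k * (-1) ^ (k % Q) := by
  nth_rw 2 [← Nat.div_add_mod k Q]
  rw [pow_add, pow_mul, hQ.neg_one_pow, mul_assoc, ← mul_pow, neg_one_mul, neg_neg, one_pow,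
    mul_one]

-- Multiplying the two factors of `neg_one_pow_div_of_odd` leaves `(-1) ^ (k % P) * (-1) ^ (k % Q)`,
-- which the Chinese remainder theorem sums as a product.
lemma sum_neg_one_pow_div_mul {P Q : ℕ} (hP : Odd P) (hQ : Odd Q) (h : P.Coprime Q) :
    ∑ k ∈ Finset.range (2 * (P * Q)), (-1 : ℝ) ^ (k / P) * (-1) ^ (k / Q) = 2 := by
  have hmod (k : ℕ) : (-1 : ℝ) ^ (k / P) * (-1) ^ (k / Q) = (-1) ^ (k % P) * (-1) ^ (k % Q) := by
    rw [neg_one_pow_div_of_odd hP, neg_one_pow_div_of_odd hQ, mul_mul_mul_comm, ← mul_pow,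
      neg_one_mul, neg_neg, one_pow, one_mul]
  have hsum : ∑ k ∈ Finset.range (P * Q), (-1 : ℝ) ^ (k % P) * (-1) ^ (k % Q) = 1 := by
    rw [sum_range_mul_of_coprime hP.pos.ne' hQ.pos.ne' h (fun a => (-1 : ℝ) ^ a), neg_one_geom_sum,
      neg_one_geom_sum, if_neg (Nat.not_even_iff_odd.2 hP), if_neg (Nat.not_even_iff_odd.2 hQ),
      one_mul]
  simp only [hmod, two_mul, Finset.sum_range_add, Nat.mul_add_mod, Nat.mul_add_mod', hsum,
    one_add_one_eq_two]

lemma sgn_neg_one_pow_mul (n : ℕ) (t : ℝ) : sgn ((-1) ^ n * t) = (-1) ^ n * sgn t := by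
  rcases neg_one_pow_eq_or ℝ n with h | h <;> simp [h, sgn_neg]

lemma sgn_sin_pi_mul_midpoint {Q : ℕ} (hQ : Q ≠ 0) (k : ℕ) :
    sgn (sin (π * ((k + 1 / 2) / Q))) = (-1) ^ (k / Q) := by
  have hQ' : (0 : ℝ) < Q := by positivity
  have hk : (k : ℝ) = Q * (k / Q : ℕ) + (k % Q : ℕ) := by exact_mod_cast (Nat.div_add_mod k Q).symm
  have hmod : ((k % Q : ℕ) : ℝ) + 1 ≤ Q := by exact_mod_cast Nat.mod_lt k hQ.pos
  have hsplit : π * ((k + 1 / 2) / Q) =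
      π * (((k % Q : ℕ) + 1 / 2) / Q) + (k / Q : ℕ) * π := by
    rw [hk]
    field_simp
    ring
  have hpos : 0 < sin (π * (((k % Q : ℕ) + 1 / 2) / Q)) := by
    refine sin_pos_of_pos_of_lt_pi (by positivity) (mul_lt_of_lt_one_right pi_pos ?_)
    rw [div_lt_one hQ']
    linarith
  rw [hsplit, sin_add_nat_mul_pi, sgn_neg_one_pow_mul, sgn_of_pos hpos, mul_one]

namespace EquidistributedMod1

variable {a : ℕ → ℝ} {g : ℝ → ℝ} {K : ℕ} {L : ℝ}

lemma hasMean_sgn_comp_add (ha : EquidistributedMod1 a) (hg : Continuous g)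
    (hper : Function.Periodic g 1) (hK : K ≠ 0) (hzero : ∀ u, g u = 0 → ∃ m : ℤ, K * u = m)
    (h : HasMean (fun n => sgn (g (a n))) L) (j : ℕ) :
    HasMean (fun n => sgn (g (a n + j / K))) L := by
  have hshift := ha.hasMean_sgn_comp (g := fun u => g (u + j / K)) (by fun_prop)
    (fun u => (congrArg g (add_right_comm u 1 _)).trans (hper _)) hK fun u hu => by
      obtain ⟨m, hm⟩ := hzero _ hu
      refine ⟨m - j, ?_⟩
      push_cast
      rw [← hm]
      field_simp
      ring
  rw [h.unique (ha.hasMean_sgn_comp hg hper hK hzero)]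
  convert hshift using 2
  have hperiod : Function.Periodic (fun k : ℕ => sgn (g ((k + 1 / 2) / K))) K := fun k => by
    have hk : (((k + K : ℕ) : ℝ) + 1 / 2) / K = (k + 1 / 2) / K + 1 := by
      push_cast
      field_simp
      ring
    simp only [hk, hper _]
  rw [← sum_range_add_of_periodic hperiod j]
  refine Finset.sum_congr rfl fun k _ => ?_
  rw [← add_div, Nat.cast_add, add_right_comm]

lemma hasMean_sgn_comp_of_antiperiodic (ha : EquidistributedMod1 a) (hg : Continuous g)
    (hanti : Function.Antiperiodic g (1 / 2)) (hK : K ≠ 0)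
    (hzero : ∀ u, g u = 0 → ∃ m : ℤ, K * u = m) : HasMean (fun n => sgn (g (a n))) 0 := by
  have hper : Function.Periodic g 1 := by simpa using hanti.periodic_two_mul
  have hzero' (u : ℝ) (hu : g u = 0) : ∃ m : ℤ, (2 * K : ℕ) * u = m := by
    obtain ⟨m, hm⟩ := hzero u hu
    exact ⟨2 * m, by push_cast; rw [mul_assoc, hm]⟩
  have hmean := ha.hasMean_sgn_comp hg hper (mul_ne_zero two_ne_zero hK) hzero'
  have hshift := ha.hasMean_sgn_comp_add hg hper (mul_ne_zero two_ne_zero hK) hzero' hmean K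
  have hhalf : (K : ℝ) / (2 * K : ℕ) = 1 / 2 := by
    push_cast
    field_simp
  simp only [hhalf, hanti _, sgn_neg] at hshift
  have hsum := hmean.add hshift
  simp only [add_neg_cancel] at hsum
  have hL := hsum.unique (HasMean.const 0)
  rwa [self_eq_neg.1 (eq_neg_of_add_eq_zero_left hL)] at hmean

end EquidistributedMod1

lemma exists_mul_eq_intCast_of_dvd {k l : ℤ} (h : k ∣ l) {u : ℝ} (hu : ∃ m : ℤ, k * u = m) :
    ∃ m : ℤ, l * u = m := by
  obtain ⟨c, rfl⟩ := h
  obtain ⟨m, hm⟩ := hu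
  refine ⟨c * m, ?_⟩
  push_cast
  rw [← hm]
  ring

lemma exists_mul_eq_intCast_of_mul_eq_zero {φ : ℝ → ℝ} {c : ℕ}
    (hφ : ∀ u, φ (2 * π * u) = 0 → ∃ m : ℤ, c * u = m) {p q : ℤ} {u : ℝ}
    (hu : φ (2 * π * (p * u)) * φ (2 * π * (q * u)) = 0) :
    ∃ m : ℤ, (c * (p * q).natAbs : ℕ) * u = m := by
  have hfactor {r : ℤ} (hr : φ (2 * π * (r * u)) = 0) (hdvd : r ∣ p * q) :
      ∃ m : ℤ, (c * (p * q).natAbs : ℕ) * u = m := by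
    rw [← Int.cast_natCast]
    refine exists_mul_eq_intCast_of_dvd (k := c * r) ?_ ?_
    · push_cast
      exact mul_dvd_mul_left _ ((dvd_abs _ _).2 hdvd)
    · push_cast
      simpa only [mul_assoc] using hφ _ hr
  rcases mul_eq_zero.1 hu with h | h
  · exact hfactor h (dvd_mul_right p q)
  · exact hfactor h (dvd_mul_left q p)

lemma exists_two_mul_eq_intCast_of_sin_eq_zero {u : ℝ} (h : sin (2 * π * u) = 0) :
    ∃ m : ℤ, (2 : ℕ) * u = m := by
  obtain ⟨m, hm⟩ := sin_eq_zero_iff.1 h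
  refine ⟨m, mul_right_cancel₀ pi_ne_zero ?_⟩
  push_cast
  linear_combination -hm

lemma exists_four_mul_eq_intCast_of_cos_eq_zero {u : ℝ} (h : cos (2 * π * u) = 0) :
    ∃ m : ℤ, (4 : ℕ) * u = m := by
  obtain ⟨m, hm⟩ := cos_eq_zero_iff.1 h
  refine ⟨2 * m + 1, mul_right_cancel₀ pi_ne_zero ?_⟩
  push_cast
  linear_combination 2 * hm

lemma periodic_sin_mul_sin (p q : ℤ) :
    Function.Periodic (fun u : ℝ => sin (2 * π * (p * u)) * sin (2 * π * (q * u))) 1 := fun u => by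
  have hone (r : ℤ) : sin (2 * π * (r * (u + 1))) = sin (2 * π * (r * u)) := by
    rw [← sin_add_int_mul_two_pi (2 * π * (r * u)) r]
    congr 1
    ring
  simp only [hone]

lemma emod_four_eq_one_or_three_of_odd {p : ℤ} (hp : Odd p) : p % 4 = 1 ∨ p % 4 = 3 := by
  rw [Int.odd_iff] at hp
  omega

lemma cos_two_pi_mul_eq_χ₄_mul_sin {p : ℤ} (hp : Odd p) (u : ℝ) :
    cos (2 * π * (p * u)) = ZMod.χ₄ p * sin (2 * π * (p * (u + 1 / 4))) := by
  rcases emod_four_eq_one_or_three_of_odd hp with h | h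
  · obtain ⟨k, hk⟩ : ∃ k, p = 4 * k + 1 := ⟨p / 4, by omega⟩
    rw [ZMod.χ₄_int_one_mod_four h, Int.cast_one, one_mul, ← sin_add_pi_div_two,
      ← sin_add_int_mul_two_pi _ k, hk]
    congr 1
    push_cast
    ring
  · obtain ⟨k, hk⟩ : ∃ k, p = 4 * k - 1 := ⟨p / 4 + 1, by omega⟩
    rw [ZMod.χ₄_int_three_mod_four h, Int.cast_neg, Int.cast_one, neg_one_mul, ← sin_neg,
      ← sin_pi_div_two_sub, ← sin_sub_int_mul_two_pi _ k, hk]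
    congr 1
    push_cast
    ring

lemma sgn_χ₄_mul {p : ℤ} (hp : Odd p) (t : ℝ) : sgn (ZMod.χ₄ p * t) = ZMod.χ₄ p * sgn t := by
  rcases emod_four_eq_one_or_three_of_odd hp with h | h
  · simp [ZMod.χ₄_int_one_mod_four h]
  · simp [ZMod.χ₄_int_three_mod_four h, sgn_neg]

namespace EquidistributedMod1

variable {a : ℕ → ℝ}

lemma hasMean_sgn_mul_of_odd_add (ha : EquidistributedMod1 a) {φ : ℝ → ℝ} (hφ : Continuous φ)
    (hanti : Function.Antiperiodic φ π) {c : ℕ} (hc : c ≠ 0)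
    (hzero : ∀ u, φ (2 * π * u) = 0 → ∃ m : ℤ, c * u = m) {p q : ℤ} (hp : p ≠ 0) (hq : q ≠ 0)
    (hpq : Odd (p + q)) :
    HasMean (fun n => sgn (φ (2 * π * (p * a n)) * φ (2 * π * (q * a n)))) 0 := by
  refine ha.hasMean_sgn_comp_of_antiperiodic
    (g := fun u => φ (2 * π * (p * u)) * φ (2 * π * (q * u))) (by fun_prop) (fun u => ?_)
    (by simp [hc, hp, hq]) fun u => exists_mul_eq_intCast_of_mul_eq_zero hzero
  have hhalf (r : ℤ) :
      φ (2 * π * (r * (u + 1 / 2))) = r.negOnePow * φ (2 * π * (r * u)) := by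
    rw [← hanti.add_int_mul_eq]
    congr 1
    ring
  simp only [hhalf]
  rw [mul_mul_mul_comm, ← Int.cast_mul, ← Units.val_mul, ← Int.negOnePow_add,
    Int.negOnePow_odd _ hpq, Units.val_neg, Units.val_one, Int.cast_neg, Int.cast_one, neg_one_mul]

lemma hasMean_sgn_sin_mul_sin_natCast (ha : EquidistributedMod1 a) {P Q : ℕ} (hP : Odd P)
    (hQ : Odd Q) (h : P.Coprime Q) :
    HasMean (fun n => sgn (sin (2 * π * (P * a n)) * sin (2 * π * (Q * a n)))) (1 / (P * Q)) := by
  have hP0 := hP.pos.ne'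
  have hQ0 := hQ.pos.ne'
  have hmean := ha.hasMean_sgn_comp (g := fun u => sin (2 * π * (P * u)) * sin (2 * π * (Q * u)))
    (by fun_prop) (by simpa using periodic_sin_mul_sin P Q) (K := 2 * (P * Q)) (by positivity)
    fun u hu => ?_
  · convert hmean using 1
    have hsgn (k : ℕ) :
        sgn (sin (2 * π * (P * ((k + 1 / 2) / (2 * (P * Q) : ℕ)))) *
          sin (2 * π * (Q * ((k + 1 / 2) / (2 * (P * Q) : ℕ))))) =
        (-1) ^ (k / P) * (-1) ^ (k / Q) := by
      rw [sgn_mul, mul_comm ((-1 : ℝ) ^ _), ← sgn_sin_pi_mul_midpoint hP0,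
        ← sgn_sin_pi_mul_midpoint hQ0]
      congr 3 <;>
      · push_cast
        field_simp
    simp only [hsgn, sum_neg_one_pow_div_mul hP hQ h]
    push_cast
    field_simp
  · simpa [Int.natAbs_mul] using exists_mul_eq_intCast_of_mul_eq_zero (p := P) (q := Q)
      (fun _ => exists_two_mul_eq_intCast_of_sin_eq_zero) (by simpa using hu)

lemma hasMean_sgn_sin_mul_sin_of_odd (ha : EquidistributedMod1 a) {p q : ℤ} (hp : Odd p)
    (hq : Odd q) (hpq : IsCoprime p q) :
    HasMean (fun n => sgn (sin (2 * π * (p * a n)) * sin (2 * π * (q * a n)))) (1 / (p * q)) := by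
  have hmean := ha.hasMean_sgn_sin_mul_sin_natCast hp.natAbs hq.natAbs
    (Int.isCoprime_iff_gcd_eq_one.1 hpq)
  rcases Int.natAbs_eq p with h₁ | h₁ <;> rcases Int.natAbs_eq q with h₂ | h₂ <;> rw [h₁, h₂] <;>
    first
    | simpa using hmean
    | simpa [sgn_neg] using hmean.const_mul (-1)

lemma hasMean_sgn_cos_mul_cos_of_odd (ha : EquidistributedMod1 a) {p q : ℤ} (hp : Odd p)
    (hq : Odd q) (hpq : IsCoprime p q) :
    HasMean (fun n => sgn (cos (2 * π * (p * a n)) * cos (2 * π * (q * a n))))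
      (ZMod.χ₄ p * ZMod.χ₄ q / (p * q)) := by
  have hp0 : p ≠ 0 := by rintro rfl; simp at hp
  have hq0 : q ≠ 0 := by rintro rfl; simp at hq
  have hzero (u : ℝ) (hu : sin (2 * π * u) = 0) : ∃ m : ℤ, (4 : ℕ) * u = m := by
    obtain ⟨m, hm⟩ := exists_two_mul_eq_intCast_of_sin_eq_zero hu
    refine ⟨2 * m, ?_⟩
    push_cast at hm ⊢
    linear_combination 2 * hm
  have hshift := ha.hasMean_sgn_comp_add (by fun_prop) (periodic_sin_mul_sin p q)
    (K := 4 * (p * q).natAbs) (by simp [hp0, hq0])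
    (fun u => exists_mul_eq_intCast_of_mul_eq_zero hzero)
    (ha.hasMean_sgn_sin_mul_sin_of_odd hp hq hpq) (p * q).natAbs
  have hquarter : ((p * q).natAbs : ℝ) / (4 * (p * q).natAbs : ℕ) = 1 / 4 := by
    have : ((p * q).natAbs : ℝ) ≠ 0 := by simp [hp0, hq0]
    push_cast
    field_simp
  rw [hquarter] at hshift
  have hχ := hshift.const_mul (ZMod.χ₄ p * ZMod.χ₄ q)
  rw [mul_one_div] at hχ
  convert hχ using 2 with n
  rw [cos_two_pi_mul_eq_χ₄_mul_sin hp, cos_two_pi_mul_eq_χ₄_mul_sin hq, sgn_mul, sgn_χ₄_mul hp,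
    sgn_χ₄_mul hq, sgn_mul, mul_mul_mul_comm]

end EquidistributedMod1

/-! ### Comparison with the free solution -/

/-- The solution of the free equation `u'' = -κ² u` with `u 0 = a` and `u' 0 = b`, for `κ ≠ 0`; it
is the high-energy approximation to solutions of `w'' = (U - κ²) w`. -/
noncomputable def freeSolution (κ a b s : ℝ) : ℝ :=
  a * cos (κ * s) + b / κ * sin (κ * s)

section Oscillator

variable {U w w' : ℝ → ℝ} {κ : ℝ}

-- Duhamel's formula, by integrating the derivative of
-- `s ↦ w s * cos (κ * (z - s)) + w' s / κ * sin (κ * (z - s))`.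
lemma sub_freeSolution_eq_integral {z : ℝ} (hU : IntervalIntegrable U volume 0 z) (hκ : κ ≠ 0)
    (hw : ∀ s, HasDerivAt w (w' s) s) (hw' : ∀ s, HasDerivAt w' ((U s - κ ^ 2) * w s) s) :
    w z - freeSolution κ (w 0) (w' 0) z =
      ∫ s in (0 : ℝ)..z, U s * (w s * sin (κ * (z - s)) / κ) := by
  have hwc : Continuous w := continuous_iff_continuousAt.2 fun s => (hw s).continuousAt
  have harg (s : ℝ) : HasDerivAt (fun s => κ * (z - s)) (-κ) s := by
    simpa using ((hasDerivAt_id s).const_sub z).const_mul κ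
  have hderiv (s : ℝ) : HasDerivAt
      (fun s => w s * cos (κ * (z - s)) + w' s / κ * sin (κ * (z - s)))
      (U s * (w s * sin (κ * (z - s)) / κ)) s := by
    refine (((hw s).mul (harg s).cos).add (((hw' s).div_const κ).mul (harg s).sin)).congr_deriv ?_
    field_simp
    ring
  rw [intervalIntegral.integral_eq_sub_of_hasDerivAt (fun s _ => hderiv s)
    (hU.mul_continuousOn (by fun_prop))]
  simp [freeSolution]

lemma abs_sub_freeSolution_le_of_abs_le {X B : ℝ} (hU : IntervalIntegrable U volume (-X) X)
    (hκ : 0 < κ) (hw : ∀ s, HasDerivAt w (w' s) s)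
    (hw' : ∀ s, HasDerivAt w' ((U s - κ ^ 2) * w s) s) (hB : ∀ s, |s| ≤ X → |w s| ≤ B) {z : ℝ}
    (hz : |z| ≤ X) :
    |w z - freeSolution κ (w 0) (w' 0) z| ≤ (∫ s in (-X)..X, |U s|) * B / κ := by
  have hX : 0 ≤ X := (abs_nonneg z).trans hz
  have hzX := abs_le.1 hz
  have hsub : Set.uIcc 0 z ⊆ Set.uIcc (-X) X :=
    Set.uIcc_subset_uIcc (Set.mem_uIcc.2 (by simp [hX])) (Set.mem_uIcc.2 (Or.inl hzX))
  have hsub' : Set.uIoc 0 z ⊆ Set.uIoc (-X) X := by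
    rw [Set.uIoc_of_le (neg_le_self hX)]
    intro s hs
    rcases Set.mem_uIoc.1 hs with h | h <;> constructor <;> linarith [h.1, h.2]
  have hB0 : 0 ≤ B := (abs_nonneg _).trans (hB z hz)
  have hU0 : IntervalIntegrable U volume 0 z := hU.mono_set hsub
  rw [sub_freeSolution_eq_integral hU0 hκ.ne' hw hw', ← Real.norm_eq_abs]
  calc ‖∫ s in (0 : ℝ)..z, U s * (w s * sin (κ * (z - s)) / κ)‖
      ≤ |(∫ s in (0 : ℝ)..z, |U s| * (B / κ))| := by
        refine intervalIntegral.norm_integral_le_abs_of_norm_le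
          (ae_restrict_of_forall_mem measurableSet_uIoc fun s hs => ?_) (hU0.abs.mul_const _)
        have hsX := hsub' hs
        rw [Set.uIoc_of_le (neg_le_self hX)] at hsX
        have hs : |s| ≤ X := abs_le.2 ⟨hsX.1.le, hsX.2⟩
        rw [norm_mul, Real.norm_eq_abs, Real.norm_eq_abs, abs_div, abs_mul, abs_of_pos hκ]
        gcongr
        exact (mul_le_of_le_one_right (abs_nonneg _) (abs_sin_le_one _)).trans (hB s hs)
    _ = |(∫ s in (0 : ℝ)..z, |U s|)| * (B / κ) := by
        rw [intervalIntegral.integral_mul_const, abs_mul, abs_of_nonneg (div_nonneg hB0 hκ.le)]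
    _ ≤ |(∫ s in (-X)..X, |U s|)| * (B / κ) := by
        refine mul_le_mul_of_nonneg_right ?_ (div_nonneg hB0 hκ.le)
        exact intervalIntegral.abs_integral_mono_interval hsub' (ae_of_all _ fun s => abs_nonneg _)
          hU.abs
    _ = (∫ s in (-X)..X, |U s|) * B / κ := by
        rw [abs_of_nonneg (intervalIntegral.integral_nonneg (neg_le_self hX)
          fun _ _ => abs_nonneg _), mul_div_assoc]

-- The maximum `B` of `|w|` on `[-X, X]` satisfies `B ≤ M + A * B / κ ≤ M + B / 2`.
lemma abs_sub_freeSolution_le {X M : ℝ} (hU : IntervalIntegrable U volume (-X) X) (hκ : 0 < κ)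
    (hUκ : 2 * ∫ s in (-X)..X, |U s| ≤ κ) (hw : ∀ s, HasDerivAt w (w' s) s)
    (hw' : ∀ s, HasDerivAt w' ((U s - κ ^ 2) * w s) s)
    (hM : ∀ s, |freeSolution κ (w 0) (w' 0) s| ≤ M) {z : ℝ} (hz : |z| ≤ X) :
    |w z - freeSolution κ (w 0) (w' 0) z| ≤ (∫ s in (-X)..X, |U s|) * (2 * M) / κ := by
  have hwc : Continuous w := continuous_iff_continuousAt.2 fun s => (hw s).continuousAt
  have hX : -X ≤ X := neg_le_self ((abs_nonneg z).trans hz)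
  obtain ⟨s₀, hs₀, hmax⟩ := isCompact_Icc.exists_isMaxOn (Set.nonempty_Icc.2 hX)
    (continuous_abs.comp hwc).continuousOn
  have hbound {s : ℝ} (hs : |s| ≤ X) := abs_sub_freeSolution_le_of_abs_le hU hκ hw hw'
    (fun t ht => hmax (abs_le.1 ht)) hs
  simp only [Function.comp_apply] at hbound
  have hA : 0 ≤ ∫ s in (-X)..X, |U s| :=
    intervalIntegral.integral_nonneg hX fun _ _ => abs_nonneg _
  have hhalf : (∫ s in (-X)..X, |U s|) * |w s₀| / κ ≤ |w s₀| / 2 := by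
    rw [div_le_div_iff₀ hκ two_pos]
    nlinarith [abs_nonneg (w s₀)]
  have hw₀ : |w s₀| ≤ 2 * M := by
    have := abs_sub_abs_le_abs_sub (w s₀) (freeSolution κ (w 0) (w' 0) s₀)
    linarith [hbound (abs_le.2 hs₀), hM s₀]
  exact (hbound hz).trans (by gcongr)

end Oscillator

lemma mul_pos_of_abs_sub_lt_abs {s t : ℝ} (h : |s - t| < |t|) : 0 < s * t := by
  nlinarith [sq_lt_sq.2 h, sq_nonneg s]

lemma exists_forall_mul_freeSolution_pos {U : ℝ → ℝ} (hU : LocallyIntegrable U volume) (x : ℝ) :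
    ∃ A : ℝ, ∀ {κ M : ℝ} {w w' : ℝ → ℝ}, 0 < κ → (∀ s, HasDerivAt w (w' s) s) →
      (∀ s, HasDerivAt w' ((U s - κ ^ 2) * w s) s) →
      (∀ s, |freeSolution κ (w 0) (w' 0) s| ≤ M) →
      A / κ * M < |freeSolution κ (w 0) (w' 0) x| →
      0 < w x * freeSolution κ (w 0) (w' 0) x := by
  refine ⟨2 * ∫ s in (-|x|)..|x|, |U s|, fun {κ M w w'} hκ hw hw' hM hlt => ?_⟩
  have hM0 : 0 ≤ M := (abs_nonneg _).trans (hM 0)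
  have hUκ : 2 * ∫ s in (-|x|)..|x|, |U s| ≤ κ := by
    by_contra! hcon
    exact (hlt.trans_le (hM x)).not_ge (le_mul_of_one_le_left hM0 ((one_le_div hκ).2 hcon.le))
  refine mul_pos_of_abs_sub_lt_abs (lt_of_le_of_lt ?_ hlt)
  refine (abs_sub_freeSolution_le (hU.integrableOn_isCompact isCompact_uIcc).intervalIntegrable
    hκ hUκ hw hw' hM le_rfl).trans_eq ?_
  ring

/-! ### Families of solutions with equidistributed frequencies -/

lemma HasMean.hasDensity_sgn_eq_sgn {u v : ℕ → ℝ} {L : ℝ}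
    (h : HasMean (fun n => sgn (u n * v n)) L) (huv : ∀ᶠ n in densityOne, u n * v n ≠ 0) :
    HasDensity {n | sgn (u n) = sgn (v n)} ((1 + L) / 2) := by
  have hhalf := ((HasMean.const 1).add h).const_mul (1 / 2)
  rw [one_div_mul_eq_div] at hhalf
  refine hhalf.congr_densityOne (C := 2) (fun n => ?_) ?_
  · have := abs_le.1 (abs_sgn_le_one (u n * v n))
    simp only [Set.indicator_apply, Pi.one_apply, abs_le]
    split_ifs <;> constructor <;> linarith
  filter_upwards [huv] with n hn
  rw [sgn_mul, Set.indicator_apply]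
  rcases (left_ne_zero_of_mul hn).lt_or_gt with hu | hu <;>
    rcases (right_ne_zero_of_mul hn).lt_or_gt with hv | hv <;>
    norm_num [hu, hv, sgn_of_pos, sgn_of_neg]

-- The double-angle hypothesis covers `φ = cos` and `φ = sin` at once.
lemma EquidistributedMod1.eventually_lt_abs_of_abs_sin_two_mul_le {r ε : ℕ → ℝ} {x : ℝ}
    (hr : EquidistributedMod1 (fun n => r n * (4 * x))) {φ : ℝ → ℝ}
    (hφ : ∀ θ, |sin (2 * θ)| ≤ 2 * |φ θ|) (hε : Tendsto ε densityOne (nhds 0)) :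
    ∀ᶠ n in densityOne, ε n < |φ (2 * π * r n * x)| := by
  filter_upwards [hr.eventually_lt_abs_sin_pi_mul (ε := fun n => 2 * ε n)
    (by simpa using hε.const_mul 2)] with n hn
  have hangle : π * (r n * (4 * x)) = 2 * (2 * π * r n * x) := by ring
  rw [hangle] at hn
  linarith [hφ (2 * π * r n * x)]

/-- The functions `w n` solve `w'' = 4π²(V - l n) w` with derivatives `w' n`, and the frequencies
`√(l n)` are equidistributed modulo one after scaling by any nonzero real. -/
structure IsEquidistributedFamily (V : ℝ → ℝ) (l : ℕ → ℝ) (w w' : ℕ → ℝ → ℝ) : Prop where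
  hasDerivAt : ∀ n x, HasDerivAt (w n) (w' n x) x
  hasDerivAt_deriv : ∀ n x, HasDerivAt (w' n) (4 * π ^ 2 * (V x - l n) * w n x) x
  equidistributed : ∀ x ≠ 0, EquidistributedMod1 (fun n => √(l n) * x)

namespace IsEquidistributedFamily

variable {V : ℝ → ℝ} {l c : ℕ → ℝ} {w w' : ℕ → ℝ → ℝ} {φ : ℝ → ℝ} {x y : ℝ}

lemma tendsto_frequency (h : IsEquidistributedFamily V l w w') :
    Tendsto (fun n => 2 * π * √(l n)) densityOne atTop :=
  (EquidistributedMod1.tendsto_densityOne_atTop (fun _ => sqrt_nonneg _)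
    fun x hx => h.equidistributed x hx.ne').const_mul_atTop two_pi_pos

lemma eventually_mul_pos (h : IsEquidistributedFamily V l w w') (hV : LocallyIntegrable V volume)
    (hfree : ∀ n s, freeSolution (2 * π * √(l n)) (w n 0) (w' n 0) s =
      c n * φ (2 * π * √(l n) * s))
    (hc : ∀ᶠ n in densityOne, c n ≠ 0) (hφ_le : ∀ θ, |φ θ| ≤ 1)
    (hφ : ∀ θ, |sin (2 * θ)| ≤ 2 * |φ θ|) (hx : x ≠ 0) :
    ∀ᶠ n in densityOne, 0 < w n x * (c n * φ (2 * π * √(l n) * x)) := by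
  obtain ⟨A, hA⟩ := exists_forall_mul_freeSolution_pos (hV.smul (4 * π ^ 2)) x
  have h4x : 4 * x ≠ 0 := mul_ne_zero four_ne_zero hx
  have hlt := (h.equidistributed _ h4x).eventually_lt_abs_of_abs_sin_two_mul_le hφ
    (h.tendsto_frequency.const_div_atTop A)
  filter_upwards [hlt, hc, h.tendsto_frequency.eventually_gt_atTop 0] with n hn hcn hκ
  have hl : 0 ≤ l n := (sqrt_pos.1 (pos_of_mul_pos_right hκ two_pi_pos.le)).le
  rw [← hfree]
  refine hA (M := |c n|) hκ (h.hasDerivAt n) (fun s => ?_) (fun s => ?_) ?_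
  · refine (h.hasDerivAt_deriv n s).congr_deriv ?_
    rw [mul_pow, sq_sqrt hl, Pi.smul_apply, smul_eq_mul]
    ring
  · rw [hfree, abs_mul]
    exact mul_le_of_le_one_right (abs_nonneg _) (hφ_le _)
  · rw [hfree, abs_mul, mul_comm]
    exact mul_lt_mul_of_pos_left hn (abs_pos.2 hcn)

lemma hasDensity_sgn_eq_sgn (h : IsEquidistributedFamily V l w w')
    (hV : LocallyIntegrable V volume)
    (hfree : ∀ n s, freeSolution (2 * π * √(l n)) (w n 0) (w' n 0) s =
      c n * φ (2 * π * √(l n) * s))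
    (hc : ∀ᶠ n in densityOne, c n ≠ 0) (hφ_le : ∀ θ, |φ θ| ≤ 1)
    (hφ : ∀ θ, |sin (2 * θ)| ≤ 2 * |φ θ|) (hx : x ≠ 0) (hy : y ≠ 0) {L : ℝ}
    (hL : HasMean (fun n => sgn (φ (2 * π * √(l n) * x) * φ (2 * π * √(l n) * y))) L) :
    HasDensity {n | sgn (w n x) = sgn (w n y)} ((1 + L) / 2) := by
  have hpos : ∀ᶠ n in densityOne,
      0 < w n x * w n y * (φ (2 * π * √(l n) * x) * φ (2 * π * √(l n) * y)) := by
    filter_upwards [h.eventually_mul_pos hV hfree hc hφ_le hφ hx,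
      h.eventually_mul_pos hV hfree hc hφ_le hφ hy] with n hnx hny
    refine pos_of_mul_pos_right (a := c n ^ 2) ?_ (sq_nonneg _)
    convert mul_pos hnx hny using 1
    ring
  exact HasMean.hasDensity_sgn_eq_sgn
    (hL.congr_densityOne (fun n => abs_sgn_sub_sgn_le_two _ _)
      (hpos.mono fun n => sgn_eq_sgn_of_mul_pos))
    (hpos.mono fun n hn => left_ne_zero_of_mul hn.ne')

lemma hasDensity_sgn_eq_sgn_of_deriv_zero (h : IsEquidistributedFamily V l w w')
    (hV : LocallyIntegrable V volume) (hw'0 : ∀ n, w' n 0 = 0) (hw0 : ∀ n, w n 0 ≠ 0)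
    (hx : x ≠ 0) (hy : y ≠ 0) {L : ℝ}
    (hL : HasMean (fun n => sgn (cos (2 * π * √(l n) * x) * cos (2 * π * √(l n) * y))) L) :
    HasDensity {n | sgn (w n x) = sgn (w n y)} ((1 + L) / 2) := by
  refine h.hasDensity_sgn_eq_sgn (c := fun n => w n 0) hV (fun n s => ?_)
    (Eventually.of_forall hw0) abs_cos_le_one (fun θ => ?_) hx hy hL
  · simp [freeSolution, hw'0]
  · rw [sin_two_mul, mul_assoc, abs_mul, abs_two, abs_mul]
    gcongr
    exact mul_le_of_le_one_left (abs_nonneg _) (abs_sin_le_one θ)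

lemma hasDensity_sgn_eq_sgn_of_zero (h : IsEquidistributedFamily V l w w')
    (hV : LocallyIntegrable V volume) (hw0 : ∀ n, w n 0 = 0) (hw'0 : ∀ n, w' n 0 ≠ 0)
    (hx : x ≠ 0) (hy : y ≠ 0) {L : ℝ}
    (hL : HasMean (fun n => sgn (sin (2 * π * √(l n) * x) * sin (2 * π * √(l n) * y))) L) :
    HasDensity {n | sgn (w n x) = sgn (w n y)} ((1 + L) / 2) := by
  refine h.hasDensity_sgn_eq_sgn (c := fun n => w' n 0 / (2 * π * √(l n))) hV (fun n s => ?_)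
    ?_ abs_sin_le_one (fun θ => ?_) hx hy hL
  · simp [freeSolution, hw0]
  · filter_upwards [h.tendsto_frequency.eventually_gt_atTop 0] with n hn
    exact div_ne_zero (hw'0 n) hn.ne'
  · rw [sin_two_mul, mul_assoc, abs_mul, abs_two, abs_mul]
    gcongr
    exact mul_le_of_le_one_right (abs_nonneg _) (abs_cos_le_one θ)

lemma hasDensity_sgn_eq_sgn_of_even_of_odd {lam : ℕ → ℝ} (hV : LocallyIntegrable V volume)
    (heven : IsEquidistributedFamily V (fun n => lam (2 * n)) (fun n => w (2 * n))
      (fun n => w' (2 * n)))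
    (hodd : IsEquidistributedFamily V (fun n => lam (2 * n + 1)) (fun n => w (2 * n + 1))
      (fun n => w' (2 * n + 1)))
    (hw'even : ∀ n, w' (2 * n) 0 = 0) (hweven : ∀ n, w (2 * n) 0 ≠ 0)
    (hwodd : ∀ n, w (2 * n + 1) 0 = 0) (hw'odd : ∀ n, w' (2 * n + 1) 0 ≠ 0)
    {p q : ℤ} (hp : p ≠ 0) (hq : q ≠ 0) {t : ℝ} (ht : t ≠ 0) {A B : ℝ}
    (hA : HasMean (fun n => sgn (cos (2 * π * (p * (√(lam (2 * n)) * t))) *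
      cos (2 * π * (q * (√(lam (2 * n)) * t))))) A)
    (hB : HasMean (fun n => sgn (sin (2 * π * (p * (√(lam (2 * n + 1)) * t))) *
      sin (2 * π * (q * (√(lam (2 * n + 1)) * t))))) B) :
    HasDensity {n | sgn (w n (p * t)) = sgn (w n (q * t))} (((1 + A) / 2 + (1 + B) / 2) / 2) := by
  have hangle (r : ℤ) (κ : ℝ) : 2 * π * (r * (κ * t)) = 2 * π * κ * (r * t) := by ring
  simp only [hangle] at hA hB
  have hpt : p * t ≠ 0 := mul_ne_zero (Int.cast_ne_zero.2 hp) ht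
  have hqt : q * t ≠ 0 := mul_ne_zero (Int.cast_ne_zero.2 hq) ht
  exact HasMean.interleave
    (heven.hasDensity_sgn_eq_sgn_of_deriv_zero hV hw'even hweven hpt hqt hA)
    (hodd.hasDensity_sgn_eq_sgn_of_zero hV hwodd hw'odd hpt hqt hB)

end IsEquidistributedFamily

lemma correlation_eq_ite_of_odd {p q : ℤ} (hp : Odd p) (hq : Odd q) :
    ((1 + ZMod.χ₄ p * ZMod.χ₄ q / (p * q)) / 2 + (1 + 1 / (p * q)) / 2) / 2 =
      if (p % 4 = 1 ∧ q % 4 = 1) ∨ (p % 4 = 3 ∧ q % 4 = 3)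
        then 1 / 2 + 1 / (2 * (p : ℝ) * (q : ℝ)) else 1 / 2 := by
  have hχ {r : ℤ} (hr : Odd r) : (ZMod.χ₄ r : ℝ) = if r % 4 = 1 then 1 else -1 := by
    rcases emod_four_eq_one_or_three_of_odd hr with h | h
    · simp [h, ZMod.χ₄_int_one_mod_four h]
    · simp [h, ZMod.χ₄_int_three_mod_four h]
  rw [hχ hp, hχ hq]
  rcases emod_four_eq_one_or_three_of_odd hp with h₁ | h₁ <;>
    rcases emod_four_eq_one_or_three_of_odd hq with h₂ | h₂ <;>
    simp only [h₁, h₂] <;> norm_num <;> ring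

lemma not_mod_four_eq_of_odd_add {p q : ℤ} (h : Odd (p + q)) :
    ¬((p % 4 = 1 ∧ q % 4 = 1) ∨ (p % 4 = 3 ∧ q % 4 = 3)) := by
  rw [Int.odd_iff] at h
  omega

lemma odd_and_odd_or_odd_add_of_isCoprime {p q : ℤ} (h : IsCoprime p q) :
    (Odd p ∧ Odd q) ∨ Odd (p + q) := by
  by_contra! hcon
  have htwo : IsUnit (2 : ℤ) := h.isUnit_of_dvd' (even_iff_two_dvd.1 ?_) (even_iff_two_dvd.1 ?_)
  · exact absurd htwo (by decide)
  all_goals grind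

lemma eq_zero_of_hasDerivAt_zero_of_even {E : Type*} [NormedAddCommGroup E] [NormedSpace ℝ E]
    {f : ℝ → E} {f' : E} (hf : Function.Even f) (h : HasDerivAt f f' 0) : f' = 0 := by
  have hneg := deriv_comp_neg f 0
  rw [funext hf, neg_zero, h.deriv] at hneg
  have : IsAddTorsionFree E := .of_isTorsionFree ℝ E
  exact self_eq_neg.1 hneg

lemma ne_zero_of_sgn_eq_neg_one_pow {t : ℝ} {n : ℕ} (h : sgn t = (-1) ^ n) : t ≠ 0 := by
  rintro rfl
  exact pow_ne_zero n (neg_ne_zero.2 one_ne_zero) (h.symm.trans (by simp [sgn]))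

theorem schrodinger_sign_correlation_rational_general
    (V : ℝ → ℝ) (hVloc : LocallyIntegrable V volume) (lam : ℕ → ℝ) (w w' : ℕ → ℝ → ℝ)
    (hw' : ∀ n x, HasDerivAt (w n) (w' n x) x)
    (hODE : ∀ n x, HasDerivAt (w' n) (4 * π ^ 2 * (V x - lam n) * w n x) x)
    (hw'even : ∀ n, w' (2 * n) 0 = 0) (hwodd : ∀ n, w (2 * n + 1) 0 = 0)
    (H2 : ∀ x : ℝ, x ≠ 0 →
      EquidistributedMod1 (fun n => √(lam (2 * n)) * x) ∧
      EquidistributedMod1 (fun n => √(lam (2 * n + 1)) * x))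
    (hweven : ∀ n, w (2 * n) 0 ≠ 0) (hw'odd : ∀ n, w' (2 * n + 1) 0 ≠ 0)
    (x y : ℝ) (hx : x ≠ 0)
    (p q : ℤ) (hp : p ≠ 0) (hq : q ≠ 0) (hcop : IsCoprime p q)
    (hpq : (q : ℝ) * x = (p : ℝ) * y) :
    Tendsto (fun N : ℕ =>
      (((Finset.range N).filter (fun n => sgn (w n x) = sgn (w n y))).card : ℝ) / N)
      atTop (nhds (if (p % 4 = 1 ∧ q % 4 = 1) ∨ (p % 4 = 3 ∧ q % 4 = 3)
        then 1/2 + 1/(2 * (p : ℝ) * (q : ℝ)) else 1/2)) := by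
  obtain ⟨t, ht, rfl, rfl⟩ : ∃ t ≠ 0, x = p * t ∧ y = q * t := by
    have hp' : (p : ℝ) ≠ 0 := Int.cast_ne_zero.2 hp
    refine ⟨x / p, div_ne_zero hx hp', by field_simp, ?_⟩
    field_simp
    linear_combination -hpq
  obtain ⟨hA, hB⟩ := H2 t ht
  have hdensity {A B : ℝ} := IsEquidistributedFamily.hasDensity_sgn_eq_sgn_of_even_of_odd hVloc
    ⟨fun n => hw' _, fun n => hODE _, fun x hx => (H2 x hx).1⟩
    ⟨fun n => hw' _, fun n => hODE _, fun x hx => (H2 x hx).2⟩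
    hw'even hweven hwodd hw'odd hp hq ht (A := A) (B := B)
  refine hasDensity_iff_tendsto_card.1 ?_
  rcases odd_and_odd_or_odd_add_of_isCoprime hcop with ⟨hp₁, hq₁⟩ | hodd
  · rw [← correlation_eq_ite_of_odd hp₁ hq₁]
    exact hdensity (hA.hasMean_sgn_cos_mul_cos_of_odd hp₁ hq₁ hcop)
      (hB.hasMean_sgn_sin_mul_sin_of_odd hp₁ hq₁ hcop)
  · rw [if_neg (not_mod_four_eq_of_odd_add hodd)]
    convert hdensity
      (hA.hasMean_sgn_mul_of_odd_add continuous_cos cos_antiperiodic four_ne_zero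
        (fun _ => exists_four_mul_eq_intCast_of_cos_eq_zero) hp hq hodd)
      (hB.hasMean_sgn_mul_of_odd_add continuous_sin sin_antiperiodic two_ne_zero
        (fun _ => exists_two_mul_eq_intCast_of_sin_eq_zero) hp hq hodd) using 1
    norm_num

theorem schrodinger_sign_correlation_rational
    (V : ℝ → ℝ) (hVloc : LocallyIntegrable V volume)
    (hVeven : ∀ x, V (-x) = V x)
    (hVbelow : ∃ c : ℝ, ∀ᵐ x : ℝ, c ≤ V x)
    (hVinfty : Tendsto V (cocompact ℝ) atTop)
    (lam : ℕ → ℝ) (hlampos : ∀ n, 0 < lam n) (hlam : Tendsto lam atTop atTop)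
    (w w' : ℕ → ℝ → ℝ)
    (hw' : ∀ n x, HasDerivAt (w n) (w' n x) x)
    (hODE : ∀ n x, HasDerivAt (w' n) (4 * π ^ 2 * (V x - lam n) * w n x) x)
    (H1even : ∀ n, Even n → ∀ x, w n (-x) = w n x)
    (H1odd : ∀ n, Odd n → ∀ x, w n (-x) = - w n x)
    (H2 : ∀ x : ℝ, x ≠ 0 →
      EquidistributedMod1 (fun n => Real.sqrt (lam (2 * n)) * x) ∧
      EquidistributedMod1 (fun n => Real.sqrt (lam (2 * n + 1)) * x))
    (H3even : ∀ n : ℕ, sgn (w (2 * n) 0) = (-1 : ℝ) ^ n)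
    (H3odd : ∀ n : ℕ, sgn (w' (2 * n + 1) 0) = (-1 : ℝ) ^ n)
    (x y : ℝ) (hxy : x ≠ y)
    (p q : ℤ) (hp : p ≠ 0) (hq : q ≠ 0) (hcop : IsCoprime p q)
    (hpq : (q : ℝ) * x = (p : ℝ) * y) :
    Tendsto (fun N : ℕ =>
      (((Finset.range N).filter (fun n => sgn (w n x) = sgn (w n y))).card : ℝ) / N)
      atTop (nhds (if (p % 4 = 1 ∧ q % 4 = 1) ∨ (p % 4 = 3 ∧ q % 4 = 3)
        then 1/2 + 1/(2 * (p : ℝ) * (q : ℝ)) else 1/2)) := by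
  refine schrodinger_sign_correlation_rational_general V hVloc lam w w' hw' hODE
    (fun n => eq_zero_of_hasDerivAt_zero_of_even (H1even _ (even_two_mul n)) (hw' _ 0))
    (fun n => Function.Odd.map_zero (H1odd _ (odd_two_mul_add_one n))) H2
    (fun n => ne_zero_of_sgn_eq_neg_one_pow (H3even n))
    (fun n => ne_zero_of_sgn_eq_neg_one_pow (H3odd n)) x y ?_ p q hp hq hcop hpq
  rintro rfl
  exact hxy (by simpa [hp, eq_comm] using hpq)
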